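/- (One-step coupling estimate for the Nanbu scheme.) Let b be a probability measure on Θ with bounded support and 𝒞 satisfy the Lipschitz condition |𝒞(v,v*,θ) − 𝒞(w,w*,θ)| ≤ L_𝒞 (1+|θ|)(|v−w| + |v*−w*|). Fix N, Δt ∈ (0,1], a probability measure f_n with finite first moment, and random vectors V_n = (V_n^1,…,V_n^N), W_n = (W_n^1,…,W_n^N) defined on a common probability space. Let, for each i, τ_n^i ∼ Bernoulli(Δt), α_n^i uniform on [0,N), θ_n^i ∼ b, all independent of each other and of (V_n, W_n), and let W*_{f_n} be the measurable map from the coupling lemma, so that conditionally on V_n the pair (W*_{f_n}(V_n, α_n^i), V_n^{j(α_n^i)}) is an optimal coupling between f_n and the empirical measure f_n^N := (1/N)Σ_i δ_{V_n^i}. Define V_{n+1}^i = (1−τ_n^i) V_n^i + τ_n^i 𝒞(V_n^i, V_n^{j(α_n^i)}, θ_n^i) and W_{n+1}^i = (1−τ_n^i) W_n^i + τ_n^i 𝒞(W_n^i, W*_{f_n}(V_n, α_n^i), θ_n^i). Then there exist constants C₁, C₂ > 0 depending only on L_𝒞 and M_∞(b) such that for each i, E|V_{n+1}^i − W_{n+1}^i|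 ≤ (1 + Δt C₁) E|V_n^i − W_n^i| + Δt C₂ E[W₁(f_n^N, f_n)]. -/

import Mathlib

open MeasureTheory ProbabilityTheory Set
open scoped ENNReal

noncomputable section

/-- `Vec d` is the Euclidean space `ℝ^d`. -/
abbrev Vec (d : ℕ) := EuclideanSpace ℝ (Fin d)

/-- Wasserstein-1 distance between two measures, defined as the infimum of
transport costs over all couplings. -/
noncomputable def W1 {E : Type*} [MeasurableSpace E] [NormedAddCommGroup E]
    (μ ν : Measure E) : ℝ :=
  sInf { c : ℝ | ∃ γ : Measure (E × E),
    γ.map Prod.fst = μ ∧ γ.map Prod.snd = ν ∧ c = ∫ p, ‖p.1 - p.2‖ ∂γ }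

/-- Gain part `Q⁺(f,g) = 𝒞_#(f ⊗ g ⊗ b)` of the collisional operator. -/
noncomputable def Qgain {E P : Type*} [MeasurableSpace E] [MeasurableSpace P]
    (𝒞 : E → E → P → E) (b : Measure P) (f g : Measure E) : Measure E :=
  ((f.prod g).prod b).map fun p => 𝒞 p.1.1 p.1.2 p.2

/-- `q`-th moment `M_q(μ) = ∫ ‖v‖^q dμ`. -/
noncomputable def momq {E : Type*} [MeasurableSpace E] [NormedAddCommGroup E]
    (q : ℝ) (μ : Measure E) : ℝ := ∫ v, ‖v‖ ^ q ∂μ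

/-- Bernoulli law `(1-p)δ₀ + pδ₁` on `ℝ`. -/
noncomputable def bern (p : ℝ) : Measure ℝ :=
  ENNReal.ofReal (1 - p) • Measure.dirac (0 : ℝ) + ENNReal.ofReal p • Measure.dirac 1

/-- Uniform distribution on `[0,N)`. -/
noncomputable def unifIco (N : ℕ) : Measure ℝ :=
  ((N : ℝ≥0∞))⁻¹ • volume.restrict (Set.Ico (0 : ℝ) (N : ℝ))

/-- Index `j(α) = ⌊α⌋ + 1` (in 0-based indexing, `⌊α⌋`) of the collision partner. -/
def jIdx (N : ℕ) [NeZero N] (α : ℝ) : Fin N :=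
  ⟨⌊α⌋.toNat % N, Nat.mod_lt _ (Nat.pos_of_ne_zero (NeZero.ne N))⟩

/-- Empirical measure of a particle configuration. -/
noncomputable def empMeas {E : Type*} [MeasurableSpace E] {N : ℕ} (v : Fin N → E) : Measure E :=
  ((N : ℝ≥0∞))⁻¹ • ∑ i, Measure.dirac (v i)

/-- Forward Euler iterates `f_{n+1} = (1-Δt) f_n + Δt Q⁺(f_n,f_n)`. -/
noncomputable def eulerSeq {E P : Type*} [MeasurableSpace E] [MeasurableSpace P]
    (𝒞 : E → E → P → E) (b : Measure P) (f₀ : Measure E) (Δt : ℝ) : ℕ → Measure E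
  | 0 => f₀
  | n + 1 =>
      ENNReal.ofReal (1 - Δt) • eulerSeq 𝒞 b f₀ Δt n +
        ENNReal.ofReal Δt • Qgain 𝒞 b (eulerSeq 𝒞 b f₀ Δt n) (eulerSeq 𝒞 b f₀ Δt n)

/-- Piecewise-linear-in-time interpolation of the forward Euler iterates. -/
noncomputable def eulerInterp {E P : Type*} [MeasurableSpace E] [MeasurableSpace P]
    (𝒞 : E → E → P → E) (b : Measure P) (f₀ : Measure E) (Δt : ℝ) (t : ℝ) : Measure E :=
  ENNReal.ofReal (1 - (t - ⌊t / Δt⌋.toNat * Δt) / Δt) • eulerSeq 𝒞 b f₀ Δt ⌊t / Δt⌋.toNat +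
    ENNReal.ofReal ((t - ⌊t / Δt⌋.toNat * Δt) / Δt) • eulerSeq 𝒞 b f₀ Δt (⌊t / Δt⌋.toNat + 1)

/-- Monte Carlo rate `ε(N)` from `fournier2015rate`. -/
noncomputable def epsRate (d N : ℕ) : ℝ :=
  if d = 1 then (N : ℝ) ^ (-(1/2 : ℝ))
  else if d = 2 then (N : ℝ) ^ (-(1/2 : ℝ)) * Real.log (1 + N)
  else (N : ℝ) ^ (-(1 / (d : ℝ)))

/-- Right-hand side of the weak formulation of the Boltzmann-type equation,
tested against `φ`. -/
noncomputable def collRHS {E P : Type*} [MeasurableSpace E] [MeasurableSpace P]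
    (𝒞 : E → E → P → E) (b : Measure P) (μ : Measure E) (φ : E → ℝ) : ℝ :=
  (1/2) * ∫ p, (φ (𝒞 p.1.1 p.1.2 p.2) + φ (𝒞 p.1.2 p.1.1 p.2) - φ p.1.1 - φ p.1.2)
    ∂((μ.prod μ).prod b)

/-- Weak measure solution of `∂ₜ f = Q(f,f)` on `[0,T]`, with values in `P₁(ℝ^d)`
(continuity in the Wasserstein-1 distance), in integrated-in-time form. -/
def IsWeakSol {d m : ℕ} (𝒞 : Vec d → Vec d → Vec m → Vec d) (b : Measure (Vec m))
    (T : ℝ) (f : ℝ → Measure (Vec d)) : Prop :=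
  (∀ t ∈ Set.Icc (0:ℝ) T, IsProbabilityMeasure (f t)) ∧
  (∀ t ∈ Set.Icc (0:ℝ) T, Integrable (fun v : Vec d => ‖v‖) (f t)) ∧
  (∀ t ∈ Set.Icc (0:ℝ) T, ∀ ε > (0:ℝ), ∃ δ > (0:ℝ),
     ∀ s ∈ Set.Icc (0:ℝ) T, |s - t| < δ → W1 (f s) (f t) < ε) ∧
  ∀ φ : Vec d → ℝ, ContDiff ℝ (⊤ : ℕ∞) φ → HasCompactSupport φ →
    ∀ t ∈ Set.Icc (0:ℝ) T,
      (∫ v, φ v ∂(f t)) - (∫ v, φ v ∂(f 0)) = ∫ s in (0:ℝ)..t, collRHS 𝒞 b (f s) φ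

/-! One collision moves the pair apart pathwise by at most
`(1 - τ) ‖V - W‖ + τ K (‖V - W‖ + ‖V^{j(α)} - W*‖)` with `K = L (1 + M)`. The weight `τ` is
independent of both distances, so expectations factor, and freezing the configuration turns the
expected distance of the partners into `E W₁`, because the partners are optimally coupled for
each fixed configuration. -/

section Noise

variable {p : ℝ} {N : ℕ}

instance isProbabilityMeasure_unifIco [NeZero N] : IsProbabilityMeasure (unifIco N) where
  measure_univ := by
    have hN : (N : ℝ≥0∞) ≠ 0 := mod_cast NeZero.ne N
    simp [unifIco, ENNReal.inv_mul_cancel hN]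

lemma isProbabilityMeasure_bern (hp : p ∈ Icc (0 : ℝ) 1) : IsProbabilityMeasure (bern p) where
  measure_univ := by
    simp [bern, ← ENNReal.ofReal_add (sub_nonneg.2 hp.2) hp.1]

lemma ae_bern_mem_Icc : ∀ᵐ x ∂bern p, x ∈ Icc (0 : ℝ) 1 := by
  refine ae_add_measure_iff.2 ⟨Measure.ae_smul_measure ?_ _, Measure.ae_smul_measure ?_ _⟩ <;>
    simp [ae_dirac_eq]

lemma integral_id_bern (hp : 0 ≤ p) : ∫ x, x ∂bern p = p := by
  have hdirac (c a : ℝ) : Integrable (fun x => x) (ENNReal.ofReal c • Measure.dirac a) :=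
    (integrable_dirac (by simp)).smul_measure ENNReal.ofReal_ne_top
  simp [bern, integral_add_measure (hdirac _ _) (hdirac _ _), hp]

end Noise

lemma measurable_jIdx (N : ℕ) [NeZero N] : Measurable (jIdx N) :=
  (measurable_of_countable fun z : ℤ =>
    (⟨z.toNat % N, Nat.mod_lt _ (NeZero.pos N)⟩ : Fin N)).comp Int.measurable_floor

lemma measurable_eval_jIdx {E : Type*} [MeasurableSpace E] (N : ℕ) [NeZero N] :
    Measurable fun q : (Fin N → E) × ℝ => q.1 (jIdx N q.2) :=
  have heval : Measurable fun q : (Fin N → E) × Fin N => q.1 q.2 :=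
    measurable_from_prod_countable_left measurable_pi_apply
  heval.comp (measurable_fst.prodMk ((measurable_jIdx N).comp measurable_snd))

lemma integrable_empMeas {E F : Type*} [MeasurableSpace E] [MeasurableSingletonClass E]
    [NormedAddCommGroup F] {N : ℕ} (v : Fin N → E) (φ : E → F) : Integrable φ (empMeas v) := by
  rcases Nat.eq_zero_or_pos N with rfl | hN
  · simp [empMeas]
  · refine Integrable.smul_measure ?_ (by simp [hN.ne'])
    exact integrable_finsetSum_measure.2 fun i _ => integrable_dirac enorm_lt_top

section Independence

variable {Ω α β γ : Type*} [MeasurableSpace Ω] [MeasurableSpace α] [MeasurableSpace β]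
  [MeasurableSpace γ] {P : Measure Ω}

lemma indepFun_prodMk_assoc [IsFiniteMeasure P] {X : Ω → α} {Y : Ω → β} {Z : Ω → γ}
    (hX : AEMeasurable X P) (hY : AEMeasurable Y P) (hZ : AEMeasurable Z P)
    (hXY : IndepFun X Y P) (hXYZ : IndepFun (fun ω => (X ω, Y ω)) Z P) :
    IndepFun X (fun ω => (Y ω, Z ω)) P := by
  have hYZ : IndepFun Y Z P := hXYZ.comp measurable_snd measurable_id
  have hX' : HasLaw X (P.map X) P := ⟨hX, rfl⟩
  have hY' : HasLaw Y (P.map Y) P := ⟨hY, rfl⟩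
  have hZ' : HasLaw Z (P.map Z) P := ⟨hZ, rfl⟩
  refine (indepFun_iff_hasLaw_prodMk_prod hX' (hYZ.hasLaw_prod hY' hZ')).2 ?_
  exact (measurePreserving_prodAssoc _ _ _).comp_hasLaw
    (hXYZ.hasLaw_prod (hXY.hasLaw_prod hX' hY') hZ')

variable {τ D S : Ω → ℝ}

lemma integrable_convexComb_of_indepFun (hτ : Integrable τ P) (hD : Integrable D P)
    (hS : Integrable S P) (hind : IndepFun τ (fun ω => (D ω, S ω)) P) :
    Integrable (fun ω => (1 - τ ω) * D ω + τ ω * S ω) P := by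
  have hτD : IndepFun τ D P := hind.comp measurable_id measurable_fst
  have hτS : IndepFun τ S P := hind.comp measurable_id measurable_snd
  simp only [sub_mul, one_mul]
  exact (hD.sub (hτD.integrable_mul hτ hD)).add (hτS.integrable_mul hτ hS)

lemma integral_convexComb_of_indepFun (hτ : Integrable τ P) (hD : Integrable D P)
    (hS : Integrable S P) (hind : IndepFun τ (fun ω => (D ω, S ω)) P) :
    ∫ ω, (1 - τ ω) * D ω + τ ω * S ω ∂P
      = (1 - ∫ ω, τ ω ∂P) * ∫ ω, D ω ∂P + (∫ ω, τ ω ∂P) * ∫ ω, S ω ∂P := by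
  have hτD : IndepFun τ D P := hind.comp measurable_id measurable_fst
  have hτS : IndepFun τ S P := hind.comp measurable_id measurable_snd
  have hτD_int : Integrable (fun ω => τ ω * D ω) P := hτD.integrable_mul hτ hD
  have hτS_int : Integrable (fun ω => τ ω * S ω) P := hτS.integrable_mul hτ hS
  simp only [sub_mul, one_mul]
  rw [integral_add (by exact hD.sub hτD_int) hτS_int, integral_sub hD hτD_int,
    hτD.integral_fun_mul_eq_mul_integral hτ.1 hD.1, hτS.integral_fun_mul_eq_mul_integral hτ.1 hS.1]

section Freezing

variable {F : Type*} [NormedAddCommGroup F] [IsFiniteMeasure P] {ρ : Measure β}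
  {X : Ω → α} {a : Ω → β} {φ : α × β → F}

lemma integrable_comp_prodMk_of_indepFun (hX : AEMeasurable X P) (ha : HasLaw a ρ P)
    (haX : IndepFun a X P) (hφ : StronglyMeasurable φ)
    (hint : ∀ x, Integrable (fun t => φ (x, t)) ρ)
    (hnorm : Integrable (fun ω => ∫ t, ‖φ (X ω, t)‖ ∂ρ) P) :
    Integrable (fun ω => φ (X ω, a ω)) P := by
  have : IsFiniteMeasure ρ := ha.isFiniteMeasure_iff.1 inferInstance
  have hlaw := haX.symm.hasLaw_prod ⟨hX, rfl⟩ ha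
  have hprod : Integrable φ ((P.map X).prod ρ) :=
    (integrable_prod_iff hφ.aestronglyMeasurable).2 ⟨ae_of_all _ hint,
      (integrable_map_measure hφ.norm.integral_prod_right'.aestronglyMeasurable hX).2 hnorm⟩
  exact (hlaw.map_eq ▸ hprod).comp_aemeasurable hlaw.aemeasurable

lemma integral_comp_prodMk_of_indepFun [NormedSpace ℝ F] (hX : AEMeasurable X P)
    (ha : HasLaw a ρ P) (haX : IndepFun a X P) (hφ : StronglyMeasurable φ)
    (hint : Integrable (fun ω => φ (X ω, a ω)) P) :
    ∫ ω, φ (X ω, a ω) ∂P = ∫ ω, ∫ t, φ (X ω, t) ∂ρ ∂P := by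
  have : IsFiniteMeasure ρ := ha.isFiniteMeasure_iff.1 inferInstance
  have hlaw := haX.symm.hasLaw_prod ⟨hX, rfl⟩ ha
  have hprod : Integrable φ ((P.map X).prod ρ) := by
    rw [← hlaw.map_eq]
    exact (integrable_map_measure hφ.aestronglyMeasurable hlaw.aemeasurable).2 hint
  calc ∫ ω, φ (X ω, a ω) ∂P
      = ∫ q, φ q ∂(P.map X).prod ρ := hlaw.integral_comp hφ.aestronglyMeasurable
    _ = ∫ x, ∫ t, φ (x, t) ∂ρ ∂P.map X := integral_prod _ hprod
    _ = ∫ ω, ∫ t, φ (X ω, t) ∂ρ ∂P :=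
        integral_map hX hφ.integral_prod_right'.aestronglyMeasurable

end Freezing

end Independence

section Wasserstein

variable {E : Type*} [NormedAddCommGroup E] [MeasurableSpace E] {μ ν : Measure E}

lemma W1_comm (μ ν : Measure E) : W1 μ ν = W1 ν μ := by
  have hswap (γ : Measure (E × E)) :
      ∫ q, ‖q.1 - q.2‖ ∂γ.map Prod.swap = ∫ q, ‖q.1 - q.2‖ ∂γ := by
    refine (MeasurableEquiv.prodComm.measurableEmbedding.integral_map _).trans ?_
    exact integral_congr_ae (ae_of_all _ fun q => norm_sub_rev q.2 q.1)
  have hsubset (μ ν : Measure E) :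
      {c | ∃ γ : Measure (E × E), γ.map Prod.fst = μ ∧ γ.map Prod.snd = ν ∧
        c = ∫ q, ‖q.1 - q.2‖ ∂γ} ⊆
      {c | ∃ γ : Measure (E × E), γ.map Prod.fst = ν ∧ γ.map Prod.snd = μ ∧
        c = ∫ q, ‖q.1 - q.2‖ ∂γ} := by
    rintro _ ⟨γ, hfst, hsnd, rfl⟩
    refine ⟨γ.map Prod.swap, ?_, ?_, (hswap γ).symm⟩
    · rwa [Measure.map_map measurable_fst measurable_swap]
    · rwa [Measure.map_map measurable_snd measurable_swap]
  exact congrArg sInf ((hsubset μ ν).antisymm (hsubset ν μ))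

/-- `γ` is a coupling of `μ` and `ν` that attains the infimum defining `W1 μ ν`. -/
def IsOptimalCoupling (γ : Measure (E × E)) (μ ν : Measure E) : Prop :=
  γ.map Prod.fst = μ ∧ γ.map Prod.snd = ν ∧ ∫ q, ‖q.1 - q.2‖ ∂γ = W1 μ ν

variable [BorelSpace E] [SecondCountableTopology E]

lemma IsOptimalCoupling.integrable_sub {γ : Measure (E × E)} (hγ : IsOptimalCoupling γ μ ν)
    (hμ : Integrable (fun v => ‖v‖) μ) (hν : Integrable (fun v => ‖v‖) ν) :
    Integrable (fun q => q.1 - q.2) γ := by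
  obtain ⟨rfl, rfl, -⟩ := hγ
  have hfst := (integrable_norm_iff aestronglyMeasurable_id).1 hμ
  have hsnd := (integrable_norm_iff aestronglyMeasurable_id).1 hν
  exact (hfst.comp_measurable measurable_fst).sub (hsnd.comp_measurable measurable_snd)

lemma integral_norm_map_sub {S A : Type*} [MeasurableSpace S] [MeasurableSpace A] {ρ : Measure A}
    {Φ : S × A → E × E} (hΦ : Measurable Φ) (x : S) :
    ∫ q, ‖q.1 - q.2‖ ∂(ρ.map fun t => Φ (x, t)) = ∫ t, ‖(Φ (x, t)).1 - (Φ (x, t)).2‖ ∂ρ :=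
  integral_map (by fun_prop) (AEMeasurable.aestronglyMeasurable (by fun_prop))

section RandomState

variable {Ω S A : Type*} [MeasurableSpace Ω] [MeasurableSpace S] [MeasurableSpace A]
  {P : Measure Ω} [IsFiniteMeasure P] {ρ : Measure A} {X : Ω → S} {a : Ω → A} {Φ : S × A → E × E}
  {f g : S → Measure E}

lemma integrable_norm_sub_of_isOptimalCoupling (hX : AEMeasurable X P) (ha : HasLaw a ρ P)
    (haX : IndepFun a X P) (hΦ : Measurable Φ)
    (hf : ∀ x, Integrable (fun v => ‖v‖) (f x)) (hg : ∀ x, Integrable (fun v => ‖v‖) (g x))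
    (hopt : ∀ x, IsOptimalCoupling (ρ.map fun t => Φ (x, t)) (f x) (g x))
    (hW1 : Integrable (fun ω => W1 (f (X ω)) (g (X ω))) P) :
    Integrable (fun ω => ‖(Φ (X ω, a ω)).1 - (Φ (X ω, a ω)).2‖) P := by
  have hcost : Measurable fun q => (Φ q).1 - (Φ q).2 := by fun_prop
  refine (integrable_comp_prodMk_of_indepFun hX ha haX hcost.stronglyMeasurable
    (fun x => ((hopt x).integrable_sub (hf x) (hg x)).comp_measurable (by fun_prop)) ?_).norm
  simpa only [← integral_norm_map_sub hΦ, (hopt _).2.2] using hW1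

lemma integral_norm_sub_of_isOptimalCoupling (hX : AEMeasurable X P) (ha : HasLaw a ρ P)
    (haX : IndepFun a X P) (hΦ : Measurable Φ)
    (hopt : ∀ x, IsOptimalCoupling (ρ.map fun t => Φ (x, t)) (f x) (g x))
    (hint : Integrable (fun ω => ‖(Φ (X ω, a ω)).1 - (Φ (X ω, a ω)).2‖) P) :
    ∫ ω, ‖(Φ (X ω, a ω)).1 - (Φ (X ω, a ω)).2‖ ∂P = ∫ ω, W1 (f (X ω)) (g (X ω)) ∂P := by
  have hcost : Measurable fun q => ‖(Φ q).1 - (Φ q).2‖ := by fun_prop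
  rw [integral_comp_prodMk_of_indepFun hX ha haX hcost.stronglyMeasurable hint]
  simp only [← integral_norm_map_sub hΦ, (hopt _).2.2]

end RandomState

section Partner

variable {Ω : Type*} [MeasurableSpace Ω] {P : Measure Ω} [IsFiniteMeasure P] {N : ℕ} [NeZero N]
  {f : Measure E} {X : Ω → Fin N → E} {α : Ω → ℝ} {Wstar : (Fin N → E) × ℝ → E}

lemma integrable_norm_partner_sub (hf : Integrable (fun v => ‖v‖) f)
    (hX : AEMeasurable X P) (hα : HasLaw α (unifIco N) P) (hαX : IndepFun α X P)
    (hWstar : Measurable Wstar)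
    (hopt : ∀ v : Fin N → E,
      IsOptimalCoupling ((unifIco N).map fun t => (Wstar (v, t), v (jIdx N t))) f (empMeas v))
    (hW1 : Integrable (fun ω => W1 (empMeas (X ω)) f) P) :
    Integrable (fun ω => ‖X ω (jIdx N (α ω)) - Wstar (X ω, α ω)‖) P := by
  simp only [W1_comm _ f] at hW1
  simpa only [norm_sub_rev] using
    integrable_norm_sub_of_isOptimalCoupling (Φ := fun q => (Wstar q, q.1 (jIdx N q.2)))
      hX hα hαX (hWstar.prodMk (measurable_eval_jIdx N)) (fun _ => hf)
      (fun v => integrable_empMeas v _) hopt hW1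

lemma integral_norm_partner_sub (hX : AEMeasurable X P)
    (hα : HasLaw α (unifIco N) P) (hαX : IndepFun α X P) (hWstar : Measurable Wstar)
    (hopt : ∀ v : Fin N → E,
      IsOptimalCoupling ((unifIco N).map fun t => (Wstar (v, t), v (jIdx N t))) f (empMeas v))
    (hint : Integrable (fun ω => ‖X ω (jIdx N (α ω)) - Wstar (X ω, α ω)‖) P) :
    ∫ ω, ‖X ω (jIdx N (α ω)) - Wstar (X ω, α ω)‖ ∂P = ∫ ω, W1 (empMeas (X ω)) f ∂P := by
  simp only [norm_sub_rev (X _ _)] at hint ⊢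
  simp only [W1_comm _ f]
  exact integral_norm_sub_of_isOptimalCoupling (Φ := fun q => (Wstar q, q.1 (jIdx N q.2)))
    hX hα hαX (hWstar.prodMk (measurable_eval_jIdx N)) hopt hint

end Partner

end Wasserstein

section NanbuStep

variable {E Θ : Type*} [NormedAddCommGroup E] [NormedSpace ℝ E]

/-- The update `v ↦ (1 - τ) v + τ 𝒞(v, v*, θ)` of one particle with collision partner `v*`,
driven by the input `u = (τ, α, θ)`. The index `α` acts only through the choice of `v*`. -/
def nanbuStep (𝒞 : E → E → Θ → E) (u : ℝ × ℝ × Θ) (v vs : E) : E :=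
  (1 - u.1) • v + u.1 • 𝒞 v vs u.2.2

lemma norm_nanbuStep_sub_le {𝒞 : E → E → Θ → E} {u : ℝ × ℝ × Θ} {v vs w ws : E} {r : ℝ}
    (hu : u.1 ∈ Icc (0 : ℝ) 1) (h𝒞 : ‖𝒞 v vs u.2.2 - 𝒞 w ws u.2.2‖ ≤ r) :
    ‖nanbuStep 𝒞 u v vs - nanbuStep 𝒞 u w ws‖ ≤ (1 - u.1) * ‖v - w‖ + u.1 * r := by
  have hsub : nanbuStep 𝒞 u v vs - nanbuStep 𝒞 u w ws
      = (1 - u.1) • (v - w) + u.1 • (𝒞 v vs u.2.2 - 𝒞 w ws u.2.2) := by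
    simp only [nanbuStep]
    module
  calc ‖nanbuStep 𝒞 u v vs - nanbuStep 𝒞 u w ws‖
      ≤ ‖(1 - u.1) • (v - w)‖ + ‖u.1 • (𝒞 v vs u.2.2 - 𝒞 w ws u.2.2)‖ :=
        hsub ▸ norm_add_le _ _
    _ = (1 - u.1) * ‖v - w‖ + u.1 * ‖𝒞 v vs u.2.2 - 𝒞 w ws u.2.2‖ := by
        rw [norm_smul_of_nonneg (sub_nonneg.2 hu.2), norm_smul_of_nonneg hu.1]
    _ ≤ (1 - u.1) * ‖v - w‖ + u.1 * r := by
        gcongr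
        exact hu.1

lemma measurable_nanbuStep {Ω : Type*} [MeasurableSpace Ω] [MeasurableSpace E] [BorelSpace E]
    [SecondCountableTopology E] [MeasurableSpace Θ] {𝒞 : E → E → Θ → E}
    (h𝒞 : Measurable fun q : (E × E) × Θ => 𝒞 q.1.1 q.1.2 q.2) {U : Ω → ℝ × ℝ × Θ} {v vs : Ω → E}
    (hU : Measurable U) (hv : Measurable v) (hvs : Measurable vs) :
    Measurable fun ω => nanbuStep 𝒞 (U ω) (v ω) (vs ω) := by
  have hcoll : Measurable fun ω => 𝒞 (v ω) (vs ω) (U ω).2.2 :=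
    h𝒞.comp ((hv.prodMk hvs).prodMk hU.snd.snd)
  have hweight := hU.fst
  exact ((measurable_const.sub hweight).smul hv).add (hweight.smul hcoll)

end NanbuStep

section NanbuInput

variable {Θ Ω : Type*} [MeasurableSpace Ω]

/-- The random input `U = (τ, α, θ)` of one particle, seen together with the configuration `X` from
which its collision partner is drawn and the state `w` of the particle coupled to it: the weight
`τ` takes values in `[0, 1]` with mean `p`, the index `α` is uniform on `[0, N)`, and `M` bounds the
collision parameter `θ`. -/
structure IsNanbuInput {S T : Type*} [MeasurableSpace S] [MeasurableSpace T] [Norm Θ]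
    (P : Measure Ω) (N : ℕ) (p M : ℝ) (U : Ω → ℝ × ℝ × Θ) (X : Ω → S) (w : Ω → T) : Prop where
  weight_mem_Icc : ∀ᵐ ω ∂P, (U ω).1 ∈ Icc (0 : ℝ) 1
  integral_weight : ∫ ω, (U ω).1 ∂P = p
  hasLaw_index : HasLaw (fun ω => (U ω).2.1) (unifIco N) P
  norm_param_le : ∀ᵐ ω ∂P, ‖(U ω).2.2‖ ≤ M
  indepFun_weight : IndepFun (fun ω => (U ω).1) (fun ω => ((U ω).2.1, X ω, w ω)) P
  indepFun_index : IndepFun (fun ω => (U ω).2.1) X P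

variable {P : Measure Ω} {N : ℕ} {p M : ℝ}

lemma IsNanbuInput.mean_nonneg {S T : Type*} [MeasurableSpace S] [MeasurableSpace T] [Norm Θ]
    {U : Ω → ℝ × ℝ × Θ} {X : Ω → S} {w : Ω → T} (h : IsNanbuInput P N p M U X w) : 0 ≤ p :=
  h.integral_weight ▸ integral_nonneg_of_ae (h.weight_mem_Icc.mono fun _ hω => hω.1)

lemma isNanbuInput_of_hasLaw {S T : Type*} [MeasurableSpace S] [MeasurableSpace T]
    [MeasurableSpace Θ] [Norm Θ] [NeZero N] {b : Measure Θ} [IsProbabilityMeasure b]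
    (hp : p ∈ Icc (0 : ℝ) 1) (hb : ∀ᵐ θ ∂b, ‖θ‖ ≤ M) {U : Ω → ℝ × ℝ × Θ} {X : Ω → S} {w : Ω → T}
    (hX : AEMeasurable X P) (hw : AEMeasurable w P)
    (hU : HasLaw U ((bern p).prod ((unifIco N).prod b)) P)
    (hind : IndepFun U (fun ω => (X ω, w ω)) P) :
    IsNanbuInput P N p M U X w := by
  have := isProbabilityMeasure_bern hp
  have := hU.isProbabilityMeasure
  have hτ : HasLaw (fun ω => (U ω).1) (bern p) P := measurePreserving_fst.comp_hasLaw hU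
  have hαθ : HasLaw (fun ω => (U ω).2) ((unifIco N).prod b) P :=
    measurePreserving_snd.comp_hasLaw hU
  have hθ : HasLaw (fun ω => (U ω).2.2) b P := measurePreserving_snd.comp_hasLaw hαθ
  have hτ_αθ : IndepFun (fun ω => (U ω).1) (fun ω => (U ω).2) P :=
    (indepFun_iff_hasLaw_prodMk_prod hτ hαθ).2 hU
  have hτ_all : IndepFun (fun ω => (U ω).1) (fun ω => ((U ω).2, X ω, w ω)) P :=
    indepFun_prodMk_assoc hτ.aemeasurable hαθ.aemeasurable (hX.prodMk hw) hτ_αθ hind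
  exact
    { weight_mem_Icc := ae_of_ae_map hτ.aemeasurable (hτ.map_eq ▸ ae_bern_mem_Icc)
      integral_weight := hτ.integral_eq.trans (integral_id_bern hp.1)
      hasLaw_index := measurePreserving_fst.comp_hasLaw hαθ
      norm_param_le := ae_of_ae_map hθ.aemeasurable (hθ.map_eq ▸ hb)
      indepFun_weight := hτ_all.comp measurable_id
        (measurable_fst.fst.prodMk measurable_snd)
      indepFun_index := hind.comp measurable_snd.fst measurable_fst }

lemma isNanbuInput_eval_of_hasLaw_pi {ι S T : Type*} [Fintype ι] [MeasurableSpace S]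
    [MeasurableSpace T] [MeasurableSpace Θ] [Norm Θ] [NeZero N] {b : Measure Θ}
    [IsProbabilityMeasure b] (hp : p ∈ Icc (0 : ℝ) 1) (hb : ∀ᵐ θ ∂b, ‖θ‖ ≤ M)
    {U : ι → Ω → ℝ × ℝ × Θ} {V : ι → Ω → S} {W : ι → Ω → T}
    (hV : ∀ i, AEMeasurable (V i) P) (hW : ∀ i, AEMeasurable (W i) P)
    (hU : HasLaw (fun ω i => U i ω) (Measure.pi fun _ => (bern p).prod ((unifIco N).prod b)) P)
    (hind : IndepFun (fun ω i => U i ω) (fun ω i => (V i ω, W i ω)) P) (i : ι) :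
    IsNanbuInput P N p M (U i) (fun ω j => V j ω) (W i) := by
  have := isProbabilityMeasure_bern hp
  exact isNanbuInput_of_hasLaw hp hb (aemeasurable_pi_lambda _ hV) (hW i)
    ((measurePreserving_eval _ i).comp_hasLaw hU)
    (hind.comp (ψ := fun y : ι → S × T => (fun j => (y j).1, (y i).2))
      (measurable_pi_apply i) (by fun_prop))

lemma IsNanbuInput.indepFun_weight_distances {E : Type*} [NormedAddCommGroup E]
    [MeasurableSpace E] [BorelSpace E] [SecondCountableTopology E] [Norm Θ] [NeZero N]
    {U : Ω → ℝ × ℝ × Θ} {X : Ω → Fin N → E} {w : Ω → E} {Wstar : (Fin N → E) × ℝ → E}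
    (h : IsNanbuInput P N p M U X w) (hWstar : Measurable Wstar) (i : Fin N) :
    IndepFun (fun ω => (U ω).1)
      (fun ω => (‖X ω i - w ω‖, ‖X ω (jIdx N (U ω).2.1) - Wstar (X ω, (U ω).2.1)‖)) P := by
  have hpartner : Measurable fun q : ℝ × (Fin N → E) × E => q.2.1 (jIdx N q.1) :=
    (measurable_eval_jIdx N).comp (measurable_snd.fst.prodMk measurable_fst)
  exact h.indepFun_weight.comp measurable_id
    (ψ := fun q : ℝ × (Fin N → E) × E =>
      (‖q.2.1 i - q.2.2‖, ‖q.2.1 (jIdx N q.1) - Wstar (q.2.1, q.1)‖)) (by fun_prop)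

lemma IsNanbuInput.ae_norm_nanbuStep_sub_le {E S T : Type*} [NormedAddCommGroup E]
    [NormedSpace ℝ E] [MeasurableSpace S] [MeasurableSpace T] [Norm Θ] {U : Ω → ℝ × ℝ × Θ}
    {X : Ω → S} {Y : Ω → T} {L : ℝ} {𝒞 : E → E → Θ → E} (h : IsNanbuInput P N p M U X Y)
    (hL : 0 ≤ L)
    (hLip : ∀ v vs w ws θ,
      ‖𝒞 v vs θ - 𝒞 w ws θ‖ ≤ L * (1 + ‖θ‖) * (‖v - w‖ + ‖vs - ws‖))
    (v vs w ws : Ω → E) :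
    ∀ᵐ ω ∂P, ‖nanbuStep 𝒞 (U ω) (v ω) (vs ω) - nanbuStep 𝒞 (U ω) (w ω) (ws ω)‖
      ≤ (1 - (U ω).1) * ‖v ω - w ω‖
        + (U ω).1 * (L * (1 + M) * (‖v ω - w ω‖ + ‖vs ω - ws ω‖)) := by
  filter_upwards [h.weight_mem_Icc, h.norm_param_le] with ω hτω hθω
  refine norm_nanbuStep_sub_le hτω ((hLip _ _ _ _ _).trans ?_)
  gcongr

end NanbuInput

theorem nanbu_one_step_coupling_general {E Θ Ω : Type*} [NormedAddCommGroup E] [NormedSpace ℝ E]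
    [MeasurableSpace E] [BorelSpace E] [SecondCountableTopology E] [MeasurableSpace Θ] [Norm Θ]
    [MeasurableSpace Ω] {P : Measure Ω} {N : ℕ} [NeZero N] {p M L : ℝ}
    (hL : 0 ≤ L) {𝒞 : E → E → Θ → E}
    (h𝒞 : Measurable fun q : (E × E) × Θ => 𝒞 q.1.1 q.1.2 q.2)
    (hLip : ∀ v vs w ws θ,
      ‖𝒞 v vs θ - 𝒞 w ws θ‖ ≤ L * (1 + ‖θ‖) * (‖v - w‖ + ‖vs - ws‖))
    {f : Measure E} (hf : Integrable (fun v => ‖v‖) f)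
    {X : Ω → Fin N → E} {w : Ω → E} {U : Ω → ℝ × ℝ × Θ} {Wstar : (Fin N → E) × ℝ → E}
    (hX : Measurable X) (hw : Measurable w) (hU : Measurable U) (hWstar : Measurable Wstar)
    (hinput : IsNanbuInput P N p M U X w)
    (hopt : ∀ v : Fin N → E,
      IsOptimalCoupling ((unifIco N).map fun α => (Wstar (v, α), v (jIdx N α))) f (empMeas v))
    (i : Fin N) (hXw : Integrable (fun ω => ‖X ω i - w ω‖) P)
    (hW1 : Integrable (fun ω => W1 (empMeas (X ω)) f) P) :
    Integrable (fun ω => ‖nanbuStep 𝒞 (U ω) (X ω i) (X ω (jIdx N (U ω).2.1)) -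
        nanbuStep 𝒞 (U ω) (w ω) (Wstar (X ω, (U ω).2.1))‖) P ∧
      ∫ ω, ‖nanbuStep 𝒞 (U ω) (X ω i) (X ω (jIdx N (U ω).2.1)) -
          nanbuStep 𝒞 (U ω) (w ω) (Wstar (X ω, (U ω).2.1))‖ ∂P
        ≤ (1 + p * (L * (1 + M))) * (∫ ω, ‖X ω i - w ω‖ ∂P) +
          p * (L * (1 + M)) * ∫ ω, W1 (empMeas (X ω)) f ∂P := by
  have := hinput.hasLaw_index.isProbabilityMeasure
  let K := L * (1 + M)
  let D ω := ‖X ω i - w ω‖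
  let R ω := ‖X ω (jIdx N (U ω).2.1) - Wstar (X ω, (U ω).2.1)‖
  have hR : Integrable R P := integrable_norm_partner_sub hf hX.aemeasurable hinput.hasLaw_index
    hinput.indepFun_index hWstar hopt hW1
  have hER : ∫ ω, R ω ∂P = ∫ ω, W1 (empMeas (X ω)) f ∂P :=
    integral_norm_partner_sub hX.aemeasurable hinput.hasLaw_index hinput.indepFun_index hWstar
      hopt hR
  have hτ : Integrable (fun ω => (U ω).1) P :=
    .of_mem_Icc 0 1 hU.fst.aemeasurable hinput.weight_mem_Icc
  have hS : Integrable (fun ω => K * (D ω + R ω)) P := (hXw.add hR).const_mul K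
  have hind : IndepFun (fun ω => (U ω).1) (fun ω => (D ω, K * (D ω + R ω))) P :=
    (hinput.indepFun_weight_distances hWstar i).comp measurable_id
      (ψ := fun r : ℝ × ℝ => (r.1, K * (r.1 + r.2))) (by fun_prop)
  have hle := hinput.ae_norm_nanbuStep_sub_le hL hLip (fun ω => X ω i)
    (fun ω => X ω (jIdx N (U ω).2.1)) w (fun ω => Wstar (X ω, (U ω).2.1))
  have hbound := integrable_convexComb_of_indepFun hτ hXw hS hind
  have hmeas : Measurable fun ω => nanbuStep 𝒞 (U ω) (X ω i) (X ω (jIdx N (U ω).2.1)) -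
      nanbuStep 𝒞 (U ω) (w ω) (Wstar (X ω, (U ω).2.1)) :=
    (measurable_nanbuStep h𝒞 hU (measurable_pi_iff.1 hX i)
      ((measurable_eval_jIdx N).comp (hX.prodMk hU.snd.fst))).sub
      (measurable_nanbuStep h𝒞 hU hw (hWstar.comp (hX.prodMk hU.snd.fst)))
  refine ⟨hbound.mono' hmeas.norm.aestronglyMeasurable (by simpa only [norm_norm] using hle), ?_⟩
  calc ∫ ω, ‖nanbuStep 𝒞 (U ω) (X ω i) (X ω (jIdx N (U ω).2.1)) -
          nanbuStep 𝒞 (U ω) (w ω) (Wstar (X ω, (U ω).2.1))‖ ∂P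
      ≤ ∫ ω, (1 - (U ω).1) * D ω + (U ω).1 * (K * (D ω + R ω)) ∂P :=
        integral_mono_of_nonneg (ae_of_all _ fun _ => norm_nonneg _) hbound hle
    _ = (1 - p) * ∫ ω, D ω ∂P + p * (K * (∫ ω, D ω ∂P + ∫ ω, W1 (empMeas (X ω)) f ∂P)) := by
        rw [integral_convexComb_of_indepFun hτ hXw hS hind, hinput.integral_weight,
          integral_const_mul, integral_add hXw hR, hER]
    _ ≤ (1 + p * K) * ∫ ω, D ω ∂P + p * K * ∫ ω, W1 (empMeas (X ω)) f ∂P := by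
        have hD : 0 ≤ ∫ ω, D ω ∂P := integral_nonneg fun _ => norm_nonneg _
        linarith [mul_nonneg hinput.mean_nonneg hD]

/-- one-step coupling estimate for the Nanbu scheme. -/
theorem nanbu_one_step_coupling (Lc Mb : ℝ) (hLc : 0 < Lc) (hMb : 0 ≤ Mb) :
    ∃ C₁ > (0:ℝ), ∃ C₂ > (0:ℝ),
      ∀ (d m N : ℕ) [NeZero N]
        (b : Measure (Vec m)), IsProbabilityMeasure b →
        (∀ᵐ θ ∂b, ‖θ‖ ≤ Mb) →
      ∀ (𝒞 : Vec d → Vec d → Vec m → Vec d),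
        Measurable (fun p : (Vec d × Vec d) × Vec m => 𝒞 p.1.1 p.1.2 p.2) →
        (∀ v vs w ws θ,
          ‖𝒞 v vs θ - 𝒞 w ws θ‖ ≤ Lc * (1 + ‖θ‖) * (‖v - w‖ + ‖vs - ws‖)) →
      ∀ (Δt : ℝ), Δt ∈ Set.Ioc (0:ℝ) 1 →
      ∀ (fn : Measure (Vec d)), IsProbabilityMeasure fn →
        Integrable (fun v : Vec d => ‖v‖) fn →
      ∀ (Ω : Type) [MeasureSpace Ω] [IsProbabilityMeasure (ℙ : Measure Ω)]
        (V W : Fin N → Ω → Vec d) (U : Fin N → Ω → ℝ × ℝ × Vec m)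
        (Wstar : (Fin N → Vec d) × ℝ → Vec d),
        (∀ i, Measurable (V i)) → (∀ i, Measurable (W i)) →
        (∀ i, Measurable (U i)) → Measurable Wstar →
        -- the auxiliary variables (τ_n^i, α_n^i, θ_n^i), i = 1,…,N, are mutually
        -- independent with the prescribed laws, and independent of (V_n, W_n):
        (Measure.map (fun ω => fun i : Fin N => U i ω) ℙ
          = Measure.pi fun _ : Fin N => (bern Δt).prod ((unifIco N).prod b)) →
        IndepFun (fun ω => fun i : Fin N => U i ω)
          (fun ω => fun i : Fin N => (V i ω, W i ω)) ℙ →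
        -- W*_{f_n} is the map from the coupling lemma:
        (∀ v : Fin N → Vec d,
          (Measure.map (fun α : ℝ => (Wstar (v, α), v (jIdx N α))) (unifIco N)).map
              Prod.fst = fn ∧
          (Measure.map (fun α : ℝ => (Wstar (v, α), v (jIdx N α))) (unifIco N)).map
              Prod.snd = empMeas v ∧
          (∫ p, ‖p.1 - p.2‖
              ∂(Measure.map (fun α : ℝ => (Wstar (v, α), v (jIdx N α))) (unifIco N)))
            = W1 fn (empMeas v)) →
        -- finite first moments of the coupled systems:
        (∀ i, Integrable (fun ω => ‖V i ω - W i ω‖) ℙ) →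
        Integrable (fun ω => W1 (empMeas fun j => V j ω) fn) ℙ →
      ∀ i : Fin N,
        (∫ ω, ‖((1 - (U i ω).1) • V i ω +
                  (U i ω).1 • 𝒞 (V i ω) (V (jIdx N (U i ω).2.1) ω) (U i ω).2.2) -
                ((1 - (U i ω).1) • W i ω +
                  (U i ω).1 • 𝒞 (W i ω) (Wstar (fun j => V j ω, (U i ω).2.1))
                    (U i ω).2.2)‖ ∂ℙ)
          ≤ (1 + Δt * C₁) * (∫ ω, ‖V i ω - W i ω‖ ∂ℙ) +
            Δt * C₂ * ∫ ω, W1 (empMeas fun j => V j ω) fn ∂ℙ := by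
  have hK : 0 < Lc * (1 + Mb) := by positivity
  refine ⟨Lc * (1 + Mb), hK, Lc * (1 + Mb), hK, ?_⟩
  intro d m N _ b _ hb 𝒞 h𝒞 hLip Δt hΔt fn _ hfn Ω _ _ V W U Wstar hV hW hU hWstar hUlaw hind
    hopt hVW hW1 i
  have hinput : IsNanbuInput ℙ N Δt Mb (U i) (fun ω j => V j ω) (W i) :=
    isNanbuInput_eval_of_hasLaw_pi (Ioc_subset_Icc_self hΔt) hb (fun j => (hV j).aemeasurable)
      (fun j => (hW j).aemeasurable) ⟨(measurable_pi_lambda _ hU).aemeasurable, hUlaw⟩ hind i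
  exact (nanbu_one_step_coupling_general hLc.le h𝒞 hLip hfn (measurable_pi_lambda _ hV) (hW i)
    (hU i) hWstar hinput hopt i (hVW i) hW1).2

end
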